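/- Let f ∈ ℂ[X₀,X₁] be homogeneous of degree d ≥ 4 and squarefree, and let F = Y^d − f(X₀,X₁) ∈ ℂ[Y,X₀,X₁]. Then there exist a homogeneous h ∈ S^{2d−4} with Y·h ∉ J_F, and a bilinear map λ : S^d × S^{d−4} → ℂ, such that: (1) for all u ∈ S^d and v ∈ S^{d−4}, u·Y·v − λ(u,v)·Y·h ∈ J_F; (2) for u ∈ S^d, λ(u,v) = 0 for all v ∈ S^{d−4} if and only if u ∈ J_f; (3) for v ∈ S^{d−4}, λ(u,v) = 0 for all u ∈ S^d if and only if v = 0. -/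

import Mathlib

open MvPolynomial

/-- The Jacobian ideal of a binary form `f ∈ ℂ[X₀,X₁] = S`: the ideal generated by the two
partial derivatives of `f`. -/
noncomputable def jacIdealS (f : MvPolynomial (Fin 2) ℂ) : Ideal (MvPolynomial (Fin 2) ℂ) :=
  Ideal.span {pderiv 0 f, pderiv 1 f}

/-- The inclusion `S = ℂ[X₀,X₁] → T = ℂ[Y,X₀,X₁]`, where the variable `Y` of `T` is indexed
by `0` and `X₀, X₁` by `1, 2`. -/
noncomputable def embS : MvPolynomial (Fin 2) ℂ →ₐ[ℂ] MvPolynomial (Fin 3) ℂ :=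
  rename Fin.succ

/-- `F = Y^d − f(X₀,X₁) ∈ T = ℂ[Y,X₀,X₁]`. -/
noncomputable def bigF (d : ℕ) (f : MvPolynomial (Fin 2) ℂ) : MvPolynomial (Fin 3) ℂ :=
  X 0 ^ d - embS f

/-- The Jacobian ideal `J_F ⊆ T` of `F = Y^d − f`: the ideal generated by the three partial
derivatives `∂F/∂Y = d·Y^{d−1}`, `∂F/∂X₀ = −∂f/∂X₀`, `∂F/∂X₁ = −∂f/∂X₁`. -/
noncomputable def jacIdealT (d : ℕ) (f : MvPolynomial (Fin 2) ℂ) :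
    Ideal (MvPolynomial (Fin 3) ℂ) :=
  Ideal.span {pderiv 0 (bigF d f), pderiv 1 (bigF d f), pderiv 2 (bigF d f)}

lemma aux_totalDegree_pderiv (p : MvPolynomial (Fin 2) ℂ) (i : Fin 2) (h : pderiv i p ≠ 0) :
    (pderiv i p).totalDegree < p.totalDegree := by
  obtain ⟨m, hm, he⟩ := Finset.exists_mem_eq_sup (pderiv i p).support
    (support_nonempty.2 h) (fun s => s.sum fun _ e => e)
  have h1 : (pderiv i p).totalDegree = m.sum fun _ e => e := he
  rw [h1]
  rw [mem_support_iff, coeff_pderiv] at hm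
  have h2 : m + Finsupp.single i 1 ∈ p.support := by
    rw [mem_support_iff]
    exact left_ne_zero_of_mul hm
  have h3 := le_totalDegree h2
  rw [Finsupp.sum_add_index' (by simp) (by simp)] at h3
  simp at h3
  simp only [Finsupp.sum] at *
  omega

lemma aux_dvd_pderiv (p : MvPolynomial (Fin 2) ℂ) (i : Fin 2) (h : p ∣ pderiv i p) :
    pderiv i p = 0 := by
  by_contra hne
  have h1 := aux_totalDegree_pderiv p i hne
  obtain ⟨q, hq⟩ := h
  have hp : p ≠ 0 := by rintro rfl; simp at hne
  have hq0 : q ≠ 0 := by rintro rfl; simp at hq; exact hne hq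
  rw [hq, totalDegree_mul_of_isDomain hp hq0] at h1
  omega

lemma aux_const (p : MvPolynomial (Fin 2) ℂ) (h : ∀ i, pderiv i p = 0) :
    p = C (coeff 0 p) := by
  ext m
  rw [coeff_C]
  split_ifs with h0
  · rw [h0]
  · have : ∃ i, m i ≠ 0 := by
      by_contra! hc
      exact h0 (Finsupp.ext fun i => (hc i).symm)
    obtain ⟨i, hi⟩ := this
    have h1 := coeff_pderiv (i := i) p (m - Finsupp.single i 1)
    have h2 : m - Finsupp.single i 1 + Finsupp.single i 1 = m := by
      apply tsub_add_cancel_of_le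
      rw [Finsupp.single_le_iff]
      omega
    rw [h2, h i, coeff_zero] at h1
    have h3 : (((m - Finsupp.single i 1 : Fin 2 →₀ ℕ) i : ℕ) : ℂ) + 1 ≠ 0 := by
      exact Nat.cast_add_one_ne_zero _
    exact (mul_eq_zero.1 h1.symm).resolve_right h3

lemma aux_coprime (d : ℕ) (hd : 4 ≤ d) (f : MvPolynomial (Fin 2) ℂ)
    (hf : f.IsHomogeneous d) (hsf : Squarefree f) :
    IsRelPrime (pderiv 0 f) (pderiv 1 f) := by
  have heuler := hf.sum_X_mul_pderiv
  rw [Fin.sum_univ_two] at heuler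
  have hd0 : (C (d : ℂ) : MvPolynomial (Fin 2) ℂ) ≠ 0 := by
    rw [Ne, C_eq_zero]; exact_mod_cast (by omega : d ≠ 0)
  have hdu : IsUnit (C (d : ℂ) : MvPolynomial (Fin 2) ℂ) := by
    apply IsUnit.map
    exact IsUnit.mk0 _ (by exact_mod_cast (by omega : d ≠ 0))
  have heq : C (d : ℂ) * f = X 0 * pderiv 0 f + X 1 * pderiv 1 f := by
    rw [heuler]; simp
  apply WfDvdMonoid.isRelPrime_of_no_irreducible_factors
  · rintro ⟨h0, h1⟩
    rw [h0, h1] at heq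
    simp at heq
    rcases heq with h | h
    · omega
    · exact hsf.ne_zero h
  · intro p hp ha hb
    have hpp : Prime p := hp.prime
    have hpf : p ∣ f := by
      have : p ∣ C (d : ℂ) * f := by
        rw [heq]
        exact dvd_add (ha.mul_left _) (hb.mul_left _)
      exact (IsUnit.dvd_mul_left hdu).1 this
    obtain ⟨g, rfl⟩ := hpf
    have hpg : ¬ p ∣ g := fun h => hp.not_isUnit (hsf p (mul_dvd_mul_left p h))
    have key : ∀ i, p ∣ pderiv i (p * g) → pderiv i p = 0 := by
      intro i hi
      rw [pderiv_mul] at hi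
      have : p ∣ pderiv i p * g := (dvd_add_left (dvd_mul_right _ _)).1 hi
      exact aux_dvd_pderiv p i ((hpp.dvd_or_dvd this).resolve_right hpg)
    have hc := aux_const p (by
      intro i
      fin_cases i
      · exact key 0 ha
      · exact key 1 hb)
    apply hp.not_isUnit
    rw [hc]
    apply IsUnit.map
    apply IsUnit.mk0
    intro h0
    rw [h0, C_0] at hc
    exact hpp.ne_zero hc

lemma aux_dvd_deg {m n : ℕ} (hnm : n < m) {p q : MvPolynomial (Fin 2) ℂ}
    (hp : p.IsHomogeneous m) (hq : q.IsHomogeneous n) (h : p ∣ q) : q = 0 := by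
  by_contra hne
  obtain ⟨r, rfl⟩ := h
  have h1 := hq.totalDegree hne
  rw [totalDegree_mul_of_isDomain (left_ne_zero_of_mul hne) (right_ne_zero_of_mul hne),
    hp.totalDegree (left_ne_zero_of_mul hne)] at h1
  omega

lemma aux_syz {m n : ℕ} (hnm : n < m) {a b P Q : MvPolynomial (Fin 2) ℂ}
    (ha : a.IsHomogeneous m) (hb : b.IsHomogeneous m) (hab : IsRelPrime a b)
    (hP : P.IsHomogeneous n) (hQ : Q.IsHomogeneous n) (h : P * a + Q * b = 0) :
    P = 0 ∧ Q = 0 := by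
  constructor
  · apply aux_dvd_deg hnm hb hP
    apply hab.symm.dvd_of_dvd_mul_right
    exact ⟨-Q, by linear_combination h⟩
  · apply aux_dvd_deg hnm ha hQ
    apply hab.dvd_of_dvd_mul_right
    exact ⟨-P, by linear_combination h⟩

lemma aux_comp_mul {m k : ℕ} {a : MvPolynomial (Fin 2) ℂ} (ha : a.IsHomogeneous m)
    (α : MvPolynomial (Fin 2) ℂ) (h : m ≤ k) :
    homogeneousComponent k (α * a) = homogeneousComponent (k - m) α * a := by
  let _ := MvPolynomial.gradedAlgebra (σ := Fin 2) (R := ℂ)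
  have := DirectSum.coe_decompose_mul_of_right_mem_of_le (homogeneousSubmodule (Fin 2) ℂ)
    (a := α) (b := a) (i := m) (n := k) ha h
  have e (q : MvPolynomial (Fin 2) ℂ) (i : ℕ) :
      ((DirectSum.decompose (homogeneousSubmodule (Fin 2) ℂ) q) i : MvPolynomial (Fin 2) ℂ) =
        homogeneousComponent i q := decomposition.decompose'_apply q i
  simpa only [e] using this

lemma aux_comp_mul' {m k : ℕ} {a : MvPolynomial (Fin 2) ℂ} (ha : a.IsHomogeneous m)
    (α : MvPolynomial (Fin 2) ℂ) (h : ¬ m ≤ k) :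
    homogeneousComponent k (α * a) = 0 := by
  let _ := MvPolynomial.gradedAlgebra (σ := Fin 2) (R := ℂ)
  have := DirectSum.coe_decompose_mul_of_right_mem_of_not_le (homogeneousSubmodule (Fin 2) ℂ)
    (a := α) (b := a) (i := m) (n := k) ha h
  have e (q : MvPolynomial (Fin 2) ℂ) (i : ℕ) :
      ((DirectSum.decompose (homogeneousSubmodule (Fin 2) ℂ) q) i : MvPolynomial (Fin 2) ℂ) =
        homogeneousComponent i q := decomposition.decompose'_apply q i
  simpa only [e] using this

lemma aux_mem {m k : ℕ} {a b u : MvPolynomial (Fin 2) ℂ}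
    (ha : a.IsHomogeneous m) (hb : b.IsHomogeneous m) (hu : u.IsHomogeneous k)
    (h : u ∈ Ideal.span {a, b}) :
    ∃ α β : MvPolynomial (Fin 2) ℂ, α.IsHomogeneous (k - m) ∧ β.IsHomogeneous (k - m) ∧
      α * a + β * b = u := by
  obtain ⟨α, β, hu'⟩ := Ideal.mem_span_pair.1 h
  have h1 := homogeneousComponent_eq_self hu
  rw [← hu', map_add] at h1
  by_cases hk : m ≤ k
  · rw [aux_comp_mul ha _ hk, aux_comp_mul hb _ hk, hu'] at h1
    exact ⟨_, _, homogeneousComponent_isHomogeneous _ _, homogeneousComponent_isHomogeneous _ _, h1⟩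
  · rw [aux_comp_mul' ha _ hk, aux_comp_mul' hb _ hk, hu'] at h1
    exact ⟨0, 0, isHomogeneous_zero _ _ _, isHomogeneous_zero _ _ _, by rw [← h1]; ring⟩

lemma aux_mem_lt {m k : ℕ} {a b u : MvPolynomial (Fin 2) ℂ}
    (ha : a.IsHomogeneous m) (hb : b.IsHomogeneous m) (hu : u.IsHomogeneous k) (hk : k < m)
    (h : u ∈ Ideal.span {a, b}) : u = 0 := by
  obtain ⟨α, β, hu'⟩ := Ideal.mem_span_pair.1 h
  have h1 := homogeneousComponent_eq_self hu
  rw [← hu', map_add] at h1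
  rw [aux_comp_mul' ha _ (by omega), aux_comp_mul' hb _ (by omega), hu'] at h1
  rw [← h1]; ring

lemma aux_socle {m k : ℕ} (hk : k + 2 < 2 * m) {a b u : MvPolynomial (Fin 2) ℂ}
    (ha : a.IsHomogeneous m) (hb : b.IsHomogeneous m) (hab : IsRelPrime a b)
    (hu : u.IsHomogeneous k)
    (h0 : u * X 0 ∈ Ideal.span {a, b}) (h1 : u * X 1 ∈ Ideal.span {a, b}) :
    u ∈ Ideal.span {a, b} := by
  by_cases hkm : k + 1 < m
  · have := aux_mem_lt ha hb (hu.mul (isHomogeneous_X ℂ 0)) hkm h0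
    have hu0 : u = 0 := (mul_eq_zero.1 this).resolve_right (X_ne_zero _)
    rw [hu0]; exact zero_mem _
  · obtain ⟨α, β, hα, hβ, e0⟩ := aux_mem ha hb (hu.mul (isHomogeneous_X ℂ 0)) h0
    obtain ⟨γ, δ, hγ, hδ, e1⟩ := aux_mem ha hb (hu.mul (isHomogeneous_X ℂ 1)) h1
    obtain ⟨hP, hQ⟩ := aux_syz (n := k + 1 - m + 1) (by omega) ha hb hab
      (P := α * X 1 - γ * X 0) (Q := β * X 1 - δ * X 0)
      ((hα.mul (isHomogeneous_X ℂ 1)).sub (hγ.mul (isHomogeneous_X ℂ 0)))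
      ((hβ.mul (isHomogeneous_X ℂ 1)).sub (hδ.mul (isHomogeneous_X ℂ 0)))
      (by linear_combination X 1 * e0 - X 0 * e1)
    have hX : ¬ (X 0 : MvPolynomial (Fin 2) ℂ) ∣ X 1 := by
      rw [X_dvd_X]; simp
    have hp : Prime (X 0 : MvPolynomial (Fin 2) ℂ) := X_prime
    obtain ⟨α', rfl⟩ := (hp.dvd_or_dvd (a := α) (b := X 1)
      ⟨γ, by linear_combination hP⟩).resolve_right hX
    obtain ⟨β', rfl⟩ := (hp.dvd_or_dvd (a := β) (b := X 1)
      ⟨δ, by linear_combination hQ⟩).resolve_right hX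
    rw [Ideal.mem_span_pair]
    refine ⟨α', β', mul_right_cancel₀ hp.ne_zero ?_⟩
    linear_combination e0

lemma aux_perfect {m : ℕ} {a b : MvPolynomial (Fin 2) ℂ}
    (ha : a.IsHomogeneous m) (hb : b.IsHomogeneous m) (hab : IsRelPrime a b) (j : ℕ) :
    ∀ (k : ℕ) (_ : k + j + 2 = 2 * m) (u : MvPolynomial (Fin 2) ℂ) (_ : u.IsHomogeneous k),
    (∀ v : MvPolynomial (Fin 2) ℂ, v.IsHomogeneous j → u * v ∈ Ideal.span {a, b}) →
    u ∈ Ideal.span {a, b} := by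
  induction j with
  | zero =>
    intro k _ u _ h
    simpa using h 1 (isHomogeneous_one _ _)
  | succ j ih =>
    intro k hk u hu h
    have key : ∀ i : Fin 2, u * X i ∈ Ideal.span {a, b} := by
      intro i
      apply ih (k + 1) (by omega) _ (hu.mul (isHomogeneous_X ℂ i))
      intro v hv
      rw [mul_assoc]
      apply h
      rw [add_comm]
      exact (isHomogeneous_X ℂ i).mul hv
    exact aux_socle (by omega) ha hb hab hu (key 0) (key 1)

lemma aux_finrank (n : ℕ) :
    Module.Finite ℂ (homogeneousSubmodule (Fin 2) ℂ n) ∧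
    Module.finrank ℂ (homogeneousSubmodule (Fin 2) ℂ n) = n + 1 := by
  let s : Set (Fin 2 →₀ ℕ) := {d | d.degree = n}
  let e1 : s ≃ (Finset.HasAntidiagonal.antidiagonal n : Finset (ℕ × ℕ)) :=
    { toFun := fun x => ⟨(x.1 0, x.1 1), by
        have := x.2
        simp only [s, Set.mem_ofPred_eq, Finsupp.degree_eq_sum, Fin.sum_univ_two] at this
        simpa using this⟩
      invFun := fun x => ⟨Finsupp.equivFunOnFinite.symm ![x.1.1, x.1.2], by
        have := Finset.HasAntidiagonal.mem_antidiagonal.1 x.2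
        simp only [s, Set.mem_ofPred_eq, Finsupp.degree_eq_sum, Fin.sum_univ_two]
        simpa using this⟩
      left_inv := by
        intro x
        ext i
        fin_cases i <;> simp
      right_inv := by
        intro x
        ext <;> simp }
  have : Fintype s := Fintype.ofEquiv _ e1.symm
  have hc : Fintype.card s = n + 1 := by
    rw [Fintype.card_congr e1]; simp
  let e : homogeneousSubmodule (Fin 2) ℂ n ≃ₗ[ℂ] (s →₀ ℂ) :=
    (LinearEquiv.ofEq _ _ (homogeneousSubmodule_eq_finsupp_supported (Fin 2) ℂ n)) ≪≫ₗ
      AddMonoidAlgebra.supportedEquivFinsupp s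
  refine ⟨Module.Finite.equiv e.symm, ?_⟩
  rw [e.finrank_eq, Module.finrank_finsupp_self, hc]

lemma aux_functional {m : ℕ} (hm : 2 ≤ m) {a b : MvPolynomial (Fin 2) ℂ}
    (ha : a.IsHomogeneous m) (hb : b.IsHomogeneous m) (hab : IsRelPrime a b)
    (k : ℕ) (hk : k + 2 = 2 * m) :
    ∃ l : homogeneousSubmodule (Fin 2) ℂ k →ₗ[ℂ] ℂ,
      (∃ h, l h = 1) ∧ ∀ w, l w = 0 ↔ (w : MvPolynomial (Fin 2) ℂ) ∈ Ideal.span {a, b} := by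
  have hkm : k - m + m = k := by omega
  let V := homogeneousSubmodule (Fin 2) ℂ (k - m)
  let W := homogeneousSubmodule (Fin 2) ℂ k
  let φ : (V × V) →ₗ[ℂ] W :=
    { toFun := fun p => ⟨p.1.1 * a + p.2.1 * b, by
        have h1 : (p.1.1 * a).IsHomogeneous (k - m + m) := IsHomogeneous.mul p.1.2 ha
        have h2 : (p.2.1 * b).IsHomogeneous (k - m + m) := IsHomogeneous.mul p.2.2 hb
        rw [hkm] at h1 h2
        exact h1.add h2⟩
      map_add' := by
        intro x y
        apply Subtype.ext
        simp
        ring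
      map_smul' := by
        intro c x
        apply Subtype.ext
        simp }
  have hinj : Function.Injective φ := by
    rw [← LinearMap.ker_eq_bot, LinearMap.ker_eq_bot']
    rintro ⟨x, y⟩ hxy
    have h1 : x.1 * a + y.1 * b = 0 := congrArg Subtype.val hxy
    obtain ⟨hx, hy⟩ := aux_syz (n := k - m) (by omega) ha hb hab x.2 y.2 h1
    exact Prod.ext (Subtype.ext hx) (Subtype.ext hy)
  have : Module.Finite ℂ V := (aux_finrank _).1
  have : Module.Finite ℂ W := (aux_finrank _).1
  have hr : Module.finrank ℂ (LinearMap.range φ) = 2 * (k - m + 1) := by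
    rw [LinearMap.finrank_range_of_inj hinj, Module.finrank_prod, (aux_finrank _).2]
    ring
  have hq : Module.finrank ℂ (W ⧸ LinearMap.range φ) = Module.finrank ℂ ℂ := by
    have h1 := Submodule.finrank_quotient_add_finrank (LinearMap.range φ)
    have h2 : Module.finrank ℂ W = k + 1 := (aux_finrank k).2
    rw [hr, h2] at h1
    rw [Module.finrank_self]
    omega
  let e := LinearEquiv.ofFinrankEq (R := ℂ) _ _ hq
  refine ⟨e.toLinearMap ∘ₗ (LinearMap.range φ).mkQ, ?_, ?_⟩
  · obtain ⟨h, hh⟩ := (LinearMap.range φ).mkQ_surjective (e.symm 1)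
    exact ⟨h, by simp [hh]⟩
  · intro w
    rw [LinearMap.comp_apply, LinearEquiv.coe_coe, LinearEquiv.map_eq_zero_iff,
      Submodule.mkQ_apply, Submodule.Quotient.mk_eq_zero]
    constructor
    · rintro ⟨⟨x, y⟩, rfl⟩
      exact Ideal.mem_span_pair.2 ⟨x.1, y.1, rfl⟩
    · intro h
      obtain ⟨α, β, hα, hβ, e⟩ := aux_mem ha hb w.2 h
      exact ⟨(⟨α, hα⟩, ⟨β, hβ⟩), Subtype.ext e⟩

lemma aux_fse (p : MvPolynomial (Fin 2) ℂ) :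
    finSuccEquiv ℂ 2 (embS p) = Polynomial.C p := by
  have : ((finSuccEquiv ℂ 2 : _ →ₐ[ℂ] _).comp embS) =
      (Polynomial.CAlgHom : _ →ₐ[MvPolynomial (Fin 2) ℂ] _).restrictScalars ℂ := by
    apply MvPolynomial.algHom_ext
    intro i
    simp [embS, finSuccEquiv_X_succ]
  exact DFunLike.congr_fun this p

lemma aux_pd (d : ℕ) (f : MvPolynomial (Fin 2) ℂ) :
    pderiv 0 (bigF d f) = C (d : ℂ) * X 0 ^ (d - 1) ∧
    pderiv 1 (bigF d f) = - embS (pderiv 0 f) ∧ pderiv 2 (bigF d f) = - embS (pderiv 1 f) := by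
  have hs : Function.Injective (Fin.succ : Fin 2 → Fin 3) := Fin.succ_injective _
  have h1 : pderiv 1 (embS f) = embS (pderiv 0 f) := pderiv_rename hs 0 f
  have h2 : pderiv 2 (embS f) = embS (pderiv 1 f) := pderiv_rename hs 1 f
  have h0 : pderiv 0 (embS f) = 0 := by
    apply pderiv_eq_zero_of_notMem_vars
    intro h
    classical
    have := vars_rename (Fin.succ : Fin 2 → Fin 3) f h
    simp at this
  refine ⟨?_, ?_, ?_⟩
  · rw [bigF, map_sub, h0, pderiv_pow, pderiv_X_self]; simp
  · rw [bigF, map_sub, h1, pderiv_pow, pderiv_X_of_ne (by decide)]; simp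
  · rw [bigF, map_sub, h2, pderiv_pow, pderiv_X_of_ne (by decide)]; simp

lemma aux_emb_mem (d : ℕ) (f p : MvPolynomial (Fin 2) ℂ) (h : p ∈ jacIdealS f) :
    X 0 * embS p ∈ jacIdealT d f := by
  obtain ⟨h0, h1, h2⟩ := aux_pd d f
  obtain ⟨α, β, rfl⟩ := Ideal.mem_span_pair.1 h
  rw [jacIdealT, h0, h1, h2, Ideal.mem_span_insert]
  refine ⟨0, X 0 * embS (α * pderiv 0 f + β * pderiv 1 f), ?_, by simp⟩
  rw [Ideal.mem_span_pair]
  exact ⟨- X 0 * embS α, - X 0 * embS β, by simp only [map_add, map_mul]; ring⟩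

lemma aux_emb_mem' (d : ℕ) (hd : 4 ≤ d) (f p : MvPolynomial (Fin 2) ℂ)
    (h : X 0 * embS p ∈ jacIdealT d f) : p ∈ jacIdealS f := by
  obtain ⟨h0, h1, h2⟩ := aux_pd d f
  rw [jacIdealT, h0, h1, h2, Ideal.mem_span_insert] at h
  obtain ⟨A, z, hz, h⟩ := h
  obtain ⟨B, D, rfl⟩ := Ideal.mem_span_pair.1 hz
  have h3 := congrArg (fun q => (finSuccEquiv ℂ 2 q).coeff 1) h
  simp only [map_add, map_mul, map_neg, map_pow, aux_fse, finSuccEquiv_X_zero, mul_neg,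
    Polynomial.coeff_add, Polynomial.coeff_neg, Polynomial.coeff_mul_C, ← mul_assoc,
    Polynomial.coeff_X_one, one_mul, Polynomial.coeff_mul_X_pow'] at h3
  rw [if_neg (by omega)] at h3
  rw [jacIdealS, Ideal.mem_span_pair]
  exact ⟨_, _, by rw [h3, zero_add, ← neg_mul, ← neg_mul]⟩


/-- Let `f ∈ ℂ[X₀,X₁]` be homogeneous of degree `d ≥ 4` and squarefree, and
`F = Y^d − f(X₀,X₁)`.  Then there are `h ∈ S^{2d−4}` with `Y·h ∉ J_F` and a bilinear map
`λ : S^d × S^{d−4} → ℂ` such that: (1) `u·Y·v − λ(u,v)·Y·h ∈ J_F` for all `u ∈ S^d`,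
`v ∈ S^{d−4}`; (2) `λ(u,·) = 0` iff `u ∈ J_f`; (3) `λ(·,v) = 0` iff `v = 0`. -/
theorem stmt11 (d : ℕ) (hd : 4 ≤ d) (f : MvPolynomial (Fin 2) ℂ)
    (hf : f.IsHomogeneous d) (hsf : Squarefree f) :
    ∃ h : MvPolynomial (Fin 2) ℂ, h.IsHomogeneous (2 * d - 4) ∧
      X 0 * embS h ∉ jacIdealT d f ∧
      ∃ lam : (homogeneousSubmodule (Fin 2) ℂ d) →ₗ[ℂ]
          (homogeneousSubmodule (Fin 2) ℂ (d - 4)) →ₗ[ℂ] ℂ,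
        (∀ (u : homogeneousSubmodule (Fin 2) ℂ d)
            (v : homogeneousSubmodule (Fin 2) ℂ (d - 4)),
          embS (u : MvPolynomial (Fin 2) ℂ) * (X 0 * embS (v : MvPolynomial (Fin 2) ℂ)) -
              lam u v • (X 0 * embS h) ∈ jacIdealT d f) ∧
        (∀ u : homogeneousSubmodule (Fin 2) ℂ d,
          (∀ v, lam u v = 0) ↔ (u : MvPolynomial (Fin 2) ℂ) ∈ jacIdealS f) ∧
        (∀ v : homogeneousSubmodule (Fin 2) ℂ (d - 4),
          (∀ u, lam u v = 0) ↔ (v : MvPolynomial (Fin 2) ℂ) = 0) := by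
  have ha : (pderiv 0 f).IsHomogeneous (d - 1) := hf.pderiv
  have hb : (pderiv 1 f).IsHomogeneous (d - 1) := hf.pderiv
  have hab := aux_coprime d hd f hf hsf
  obtain ⟨l, ⟨h, hh⟩, hl⟩ := aux_functional (by omega) ha hb hab (2 * d - 4) (by omega)
  have hdd : d + (d - 4) = 2 * d - 4 := by omega
  let mulW : (homogeneousSubmodule (Fin 2) ℂ d) → (homogeneousSubmodule (Fin 2) ℂ (d - 4)) →
      homogeneousSubmodule (Fin 2) ℂ (2 * d - 4) := fun u v =>
    ⟨u.1 * v.1, by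
      have : (u.1 * v.1).IsHomogeneous (d + (d - 4)) := IsHomogeneous.mul u.2 v.2
      rw [hdd] at this
      exact this⟩
  have hmem : ∀ u v, l (mulW u v) = 0 ↔ u.1 * v.1 ∈ jacIdealS f := fun u v => hl _
  refine ⟨h.1, h.2, ?_, LinearMap.mk₂ ℂ (fun u v => l (mulW u v)) ?_ ?_ ?_ ?_, ?_, ?_, ?_⟩
  · intro hc
    have := (hl h).2 (aux_emb_mem' d hd f h.1 hc)
    rw [hh] at this
    exact one_ne_zero this
  · intro u u' v
    rw [← map_add]; congr 1; apply Subtype.ext; exact add_mul _ _ _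
  · intro c u v
    rw [← map_smul]; congr 1; apply Subtype.ext; exact smul_mul_assoc _ _ _
  · intro u v v'
    rw [← map_add]; congr 1; apply Subtype.ext; exact mul_add _ _ _
  · intro c u v
    rw [← map_smul]; congr 1; apply Subtype.ext; exact mul_smul_comm _ _ _
  · intro u v
    rw [LinearMap.mk₂_apply]
    have h1 : l (mulW u v - l (mulW u v) • h) = 0 := by
      rw [map_sub, map_smul, hh]; simp
    have h2 := aux_emb_mem d f _ ((hl _).1 h1)
    convert h2 using 1
    simp only [mulW, Submodule.coe_sub, Submodule.coe_smul, map_sub, map_smul, map_mul]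
    rw [mul_sub, mul_smul_comm]
    ring
  · intro u
    simp only [LinearMap.mk₂_apply, hmem]
    constructor
    · intro hu
      exact aux_perfect ha hb hab (d - 4) d (by omega) u.1 u.2 fun v hv => hu ⟨v, hv⟩
    · intro hu v
      exact Ideal.mul_mem_right _ _ hu
  · intro v
    simp only [LinearMap.mk₂_apply, hmem]
    constructor
    · intro hv
      refine aux_mem_lt ha hb v.2 (by omega)
        (aux_perfect ha hb hab d (d - 4) (by omega) v.1 v.2 fun u hu => ?_)
      rw [mul_comm]
      exact hv ⟨u, hu⟩
    · intro hv u
      rw [hv, mul_zero]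
      exact zero_mem _
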